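/- Let U ⊆ ℝ^m be a connected and simply connected open set. Let P_1,…,P_m : U → ℝ^{m×m} be smooth with each P_k(q) skew-symmetric, and let g_1,…,g_m : U → ℝ^m be smooth, satisfying on U for all k, l ∈ {1,…,m}: (i) ∂_k g_l − ∂_l g_k = P_l g_k − P_k g_l (the coherence condition), and (ii) ∂_k P_l − ∂_l P_k = P_l P_k − P_k P_l (flatness of the connection, i.e. the curvature condition R^D = 0 corresponding to c = 0). Then there exist smooth maps F : U → SO(m) and f : U → ℝ^m with ∂_k F = F P_k and ∂_k f = F g_k on U for all k. In particular, every flat coherent tangent bundle over a simply connected domain is realized by a smooth map f into ℝ^m whose induced coherent tangent bundle has first fundamental form ⟨∂_k f, ∂_l f⟩ = ⟨g_k, g_l⟩. -/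

import Mathlib

open scoped Matrix

noncomputable section

/-- Partial derivative of a vector-valued map in the `k`-th coordinate direction. -/
def pd {m N : ℕ} (k : Fin m) (f : (Fin m → ℝ) → (Fin N → ℝ)) :
    (Fin m → ℝ) → (Fin N → ℝ) :=
  fun q => fderiv ℝ f q (Pi.single k 1)

/-- Partial derivative of a scalar function in the `k`-th coordinate direction. -/
def pdr {m : ℕ} (k : Fin m) (g : (Fin m → ℝ) → ℝ) : (Fin m → ℝ) → ℝ :=
  fun q => fderiv ℝ g q (Pi.single k 1)

/-- Entrywise partial derivative of a matrix-valued map. -/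
def pdM {m N : ℕ} (k : Fin m) (A : (Fin m → ℝ) → Matrix (Fin N) (Fin N) ℝ) :
    (Fin m → ℝ) → Matrix (Fin N) (Fin N) ℝ :=
  fun q => Matrix.of fun i j => pdr k (fun x => A x i j) q

/-!
A flat connection form `ω` has parallel frames, `dG = G ω`, near every point `p`: solve the linear
ODE obtained by restricting `dG = G ω` to the rays from `p`, starting from `1`. If `y` is the
solution along the ray to `x`, then flatness makes `t • y t * ω (p + t • (x - p))` a solution of the
equation of variations, so that at `t = 1` the derivative of `G` is `G ω` in all directions and not
only in the radial one. Two parallel frames on a ball differ by a constant left factor, so the local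
frames are the sections of a covering space, which has a global section over a simply connected
domain.

When `ω` is skew-adjoint, `F Fᵀ` is constant along a parallel frame `F`, and `det F` is continuous
with values `±1`, so `F` stays in `SO`. The coherence condition says precisely that the form `F g`
is closed. Its potential `f` is an entry of another parallel frame: a closed `V`-valued form becomes
a flat connection form with values in the strictly triangular endomorphisms of `ℝ × V`, which
multiply to zero.
-/

open Set Metric Filter Topology ContinuousLinearMap

section LinearODE

theorem eventually_norm_sub_le_of_isCompact {E F X : Type*} [TopologicalSpace E]
    [SeminormedAddCommGroup F] [TopologicalSpace X] {K : Set X} (hK : IsCompact K)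
    {Φ : X × E → F} {x₀ : E} (hΦ : ∀ t ∈ K, ContinuousAt Φ (t, x₀)) {ε : ℝ} (hε : 0 < ε) :
    ∀ᶠ x in 𝓝 x₀, ∀ t ∈ K, ‖Φ (t, x) - Φ (t, x₀)‖ ≤ ε := by
  refine hK.eventually_forall_of_forall_eventually fun t ht ↦ ?_
  have hmoving : ContinuousAt (fun z : E × X ↦ Φ (z.2, z.1)) (x₀, t) :=
    ContinuousAt.comp (f := fun z : E × X ↦ (z.2, z.1)) (hΦ t ht) (by fun_prop)
  have hfixed : ContinuousAt (fun z : E × X ↦ Φ (z.2, x₀)) (x₀, t) :=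
    ContinuousAt.comp (f := fun z : E × X ↦ (z.2, x₀)) (hΦ t ht) (by fun_prop)
  refine ((hmoving.sub hfixed).norm.eventually_lt continuousAt_const ?_).mono fun _ h ↦ h.le
  simpa using hε

variable {E F X : Type*} [NormedAddCommGroup E] [NormedSpace ℝ E]
  [NormedAddCommGroup F] [NormedSpace ℝ F] [NormedAddCommGroup X] [NormedSpace ℝ X]

theorem eventually_norm_sub_sub_fderiv_le_of_isCompact {K : Set X} (hK : IsCompact K)
    {Φ : X × E → F} {x₀ : E} (hΦ : ∀ t ∈ K, ContDiffAt ℝ 1 Φ (t, x₀)) {ε : ℝ} (hε : 0 < ε) :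
    ∀ᶠ x in 𝓝 x₀, ∀ t ∈ K,
      ‖Φ (t, x) - Φ (t, x₀) - fderiv ℝ Φ (t, x₀) (0, x - x₀)‖ ≤ ε * ‖x - x₀‖ := by
  refine hK.eventually_forall_of_forall_eventually fun t ht ↦ ?_
  have hstrict : ∀ᶠ z : E × X in 𝓝 (x₀, t), ‖Φ (z.2, z.1) - Φ (z.2, x₀) -
      fderiv ℝ Φ (t, x₀) ((z.2, z.1) - (z.2, x₀))‖ ≤ ε / 2 * ‖(z.2, z.1) - (z.2, x₀)‖ := by
    have hpair : Tendsto (fun z : E × X ↦ ((z.2, z.1), (z.2, x₀))) (𝓝 (x₀, t))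
        (𝓝 ((t, x₀), (t, x₀))) := by
      apply Continuous.tendsto'
      · fun_prop
      · rfl
    exact hpair.eventually
      (((hΦ t ht).hasStrictFDerivAt one_ne_zero).isLittleO.bound (half_pos hε))
  have hderiv : ∀ᶠ z : E × X in 𝓝 (x₀, t),
      ‖fderiv ℝ Φ (z.2, x₀) - fderiv ℝ Φ (t, x₀)‖ < ε / 2 := by
    have hcont : ContinuousAt (fun z : E × X ↦ fderiv ℝ Φ (z.2, x₀)) (x₀, t) :=
      ContinuousAt.comp (f := fun z : E × X ↦ (z.2, x₀))
        ((hΦ t ht).fderiv_right (m := 0) (by simp)).continuousAt (by fun_prop)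
    simpa [dist_eq_norm] using Metric.tendsto_nhds.1 hcont _ (half_pos hε)
  filter_upwards [hstrict, hderiv] with ⟨x, s⟩ hs hd
  simp only [Prod.mk_sub_mk, sub_self] at hs
  calc ‖Φ (s, x) - Φ (s, x₀) - fderiv ℝ Φ (s, x₀) (0, x - x₀)‖
      = ‖(Φ (s, x) - Φ (s, x₀) - fderiv ℝ Φ (t, x₀) (0, x - x₀)) -
          (fderiv ℝ Φ (s, x₀) - fderiv ℝ Φ (t, x₀)) (0, x - x₀)‖ := by
        rw [sub_apply]; abel_nf
    _ ≤ ε / 2 * ‖x - x₀‖ + ε / 2 * ‖x - x₀‖ := by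
        refine (norm_sub_le _ _).trans (add_le_add ?_ ?_)
        · simpa using hs
        · simpa using le_of_opNorm_le _ hd.le ((0 : X), x - x₀)
    _ = ε * ‖x - x₀‖ := by ring

theorem norm_sub_le_of_isIntegralCurveOn_of_norm_deriv_sub_le {A : ℝ → F →L[ℝ] F}
    {y w w' : ℝ → F} {a b κ ε t : ℝ} (hκ : 0 < κ) (hA : ∀ s ∈ Icc a b, ‖A s‖ ≤ κ)
    (hy : IsIntegralCurveOn y (fun s ↦ A s) (Icc a b))
    (hw : ∀ s ∈ Icc a b, HasDerivWithinAt w (w' s) (Icc a b) s)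
    (hres : ∀ s ∈ Icc a b, ‖w' s - A s (w s)‖ ≤ ε) (ha : y a = w a) (ht : t ∈ Icc a b) :
    ‖y t - w t‖ ≤ ε / κ * (Real.exp (κ * (t - a)) - 1) := by
  have right_deriv {u : ℝ → F} {u' : F} {s : ℝ} (hs : s ∈ Ico a b)
      (h : HasDerivWithinAt u u' (Icc a b) s) : HasDerivWithinAt u u' (Ici s) s :=
    h.mono_of_mem_nhdsWithin (Icc_mem_nhdsGE_of_mem hs)
  have hgronwall : dist (y t) (w t) ≤ gronwallBound 0 κ (0 + ε) (t - a) :=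
    dist_le_of_approx_trajectories_ODE_of_mem (v := fun s ↦ A s) (s := fun _ ↦ univ)
      (K := ⟨κ, hκ.le⟩) (δ := 0) (εf := 0) (εg := ε)
      (fun s hs ↦ ((A s).lipschitz.weaken (hA s (Ico_subset_Icc_self hs))).lipschitzOnWith)
      (fun s hs ↦ (hy s hs).continuousWithinAt)
      (fun s hs ↦ right_deriv hs (hy s (Ico_subset_Icc_self hs)))
      (fun s _ ↦ (dist_self _).le) (fun _ _ ↦ mem_univ _)
      (fun s hs ↦ (hw s hs).continuousWithinAt)
      (fun s hs ↦ right_deriv hs (hw s (Ico_subset_Icc_self hs)))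
      (fun s hs ↦ (dist_eq_norm _ _).trans_le (hres s (Ico_subset_Icc_self hs)))
      (fun _ _ ↦ mem_univ _) (by rw [ha, dist_self]) t ht
  simpa [gronwallBound_of_K_ne_0 hκ.ne', dist_eq_norm] using hgronwall

variable {Λ : ℝ × E → F →L[ℝ] F} {x₀ : E} {a b : ℝ}

theorem eventually_norm_residual_le (hΛ : ∀ t ∈ Icc a b, ContDiffAt ℝ 1 Λ (t, x₀)) {y : ℝ → F}
    {Z : ℝ → E →L[ℝ] F} (hy : ContinuousOn y (Icc a b)) (hZ : ContinuousOn Z (Icc a b))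
    {ε : ℝ} (hε : 0 < ε) :
    ∀ᶠ x in 𝓝 x₀, ∀ t ∈ Icc a b,
      ‖Λ (t, x₀) (y t + Z t (x - x₀)) + fderiv ℝ Λ (t, x₀) (0, x - x₀) (y t) -
        Λ (t, x) (y t + Z t (x - x₀))‖ ≤ ε * ‖x - x₀‖ := by
  obtain ⟨M, hM⟩ := isCompact_Icc.exists_bound_of_continuousOn hy
  obtain ⟨N, hN⟩ := isCompact_Icc.exists_bound_of_continuousOn hZ
  have hη : 0 < ε / (|M| + |N| + 1) := by positivity
  filter_upwards [eventually_norm_sub_sub_fderiv_le_of_isCompact isCompact_Icc hΛ hη,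
    eventually_norm_sub_le_of_isCompact isCompact_Icc (fun t ht ↦ (hΛ t ht).continuousAt) hη]
    with x hlin hcont t ht
  set h := x - x₀
  set η := ε / (|M| + |N| + 1)
  calc ‖Λ (t, x₀) (y t + Z t h) + fderiv ℝ Λ (t, x₀) (0, h) (y t) - Λ (t, x) (y t + Z t h)‖
      = ‖(Λ (t, x) - Λ (t, x₀) - fderiv ℝ Λ (t, x₀) (0, h)) (y t) +
          (Λ (t, x) - Λ (t, x₀)) (Z t h)‖ := by
        rw [← norm_neg]; simp only [sub_apply, map_add]; abel_nf
    _ ≤ η * ‖h‖ * |M| + η * (|N| * ‖h‖) := by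
        refine (norm_add_le _ _).trans (add_le_add ?_ ?_)
        · exact le_of_opNorm_le_of_le _ (hlin t ht) ((hM t ht).trans (le_abs_self M))
        · exact le_of_opNorm_le_of_le _ (hcont t ht)
            (le_of_opNorm_le _ ((hN t ht).trans (le_abs_self N)) h)
    _ ≤ η * (|M| + |N| + 1) * ‖h‖ := by
        linarith [mul_nonneg hη.le (norm_nonneg h)]
    _ = ε * ‖h‖ := by rw [div_mul_cancel₀ _ (by positivity)]

theorem hasFDerivAt_of_isIntegralCurveOn (hΛ : ∀ t ∈ Icc a b, ContDiffAt ℝ 1 Λ (t, x₀))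
    {y : E → ℝ → F} {c : F} (hya : ∀ᶠ x in 𝓝 x₀, y x a = c)
    (hy : ∀ᶠ x in 𝓝 x₀, IsIntegralCurveOn (y x) (fun t ↦ Λ (t, x)) (Icc a b))
    {Z : ℝ → E →L[ℝ] F} (hZa : Z a = 0)
    (hZ : ∀ t ∈ Icc a b, HasDerivWithinAt Z
      (Λ (t, x₀) ∘L Z t + (fderiv ℝ Λ (t, x₀) ∘L inr ℝ ℝ E).flip (y x₀ t)) (Icc a b) t)
    {t : ℝ} (ht : t ∈ Icc a b) :
    HasFDerivAt (fun x ↦ y x t) (Z t) x₀ := by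
  have hy₀ := hy.self_of_nhds
  obtain ⟨M, hM⟩ : ∃ M, ∀ s ∈ Icc a b, ‖Λ (s, x₀)‖ ≤ M :=
    isCompact_Icc.exists_bound_of_continuousOn fun s hs ↦
      (ContinuousAt.comp (f := fun s ↦ (s, x₀)) (hΛ s hs).continuousAt
        (by fun_prop)).continuousWithinAt
  set κ := |M| + 1
  have hκ : 0 < κ := by positivity
  have hΛle : ∀ᶠ x in 𝓝 x₀, ∀ s ∈ Icc a b, ‖Λ (s, x)‖ ≤ κ := by
    filter_upwards [eventually_norm_sub_le_of_isCompact isCompact_Icc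
      (fun s hs ↦ (hΛ s hs).continuousAt) one_pos] with x hx s hs
    calc ‖Λ (s, x)‖ ≤ ‖Λ (s, x₀)‖ + ‖Λ (s, x) - Λ (s, x₀)‖ := norm_le_norm_add_norm_sub' _ _
      _ ≤ κ := add_le_add ((hM s hs).trans (le_abs_self M)) (hx s hs)
  set C := κ⁻¹ * Real.exp (κ * (t - a))
  have hC : 0 < C := by positivity
  refine .of_isLittleO <| Asymptotics.IsLittleO.of_bound fun ε hε ↦ ?_
  filter_upwards [hya, hy, hΛle, eventually_norm_residual_le hΛ (y := y x₀)
    (fun s hs ↦ (hy₀ s hs).continuousWithinAt) (fun s hs ↦ (hZ s hs).continuousWithinAt)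
    (div_pos hε hC)] with x hxa hx hxκ hres
  have hw : ∀ s ∈ Icc a b, HasDerivWithinAt (fun s ↦ y x₀ s + Z s (x - x₀))
      (Λ (s, x₀) (y x₀ s + Z s (x - x₀)) + fderiv ℝ Λ (s, x₀) (0, x - x₀) (y x₀ s))
      (Icc a b) s := fun s hs ↦ by
    refine ((hy₀ s hs).add ((hZ s hs).clm_apply (hasDerivWithinAt_const s _ _))).congr_deriv ?_
    simp [add_assoc]
  calc ‖y x t - y x₀ t - Z t (x - x₀)‖ = ‖y x t - (y x₀ t + Z t (x - x₀))‖ := by rw [sub_sub]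
    _ ≤ ε / C * ‖x - x₀‖ / κ * (Real.exp (κ * (t - a)) - 1) :=
        norm_sub_le_of_isIntegralCurveOn_of_norm_deriv_sub_le hκ hxκ hx hw hres
          (by simp [hxa, hya.self_of_nhds, hZa]) ht
    _ ≤ ε / C * ‖x - x₀‖ / κ * Real.exp (κ * (t - a)) := by gcongr; linarith
    _ = ε * ‖x - x₀‖ := by simp only [C]; field_simp

theorem exists_isIntegralCurveOn_of_norm_le [CompleteSpace F] {A : ℝ → F →L[ℝ] F} {κ : ℝ}
    (hab : a ≤ b) (hA : ContinuousOn A (Icc a b)) (hκ : ∀ t ∈ Icc a b, ‖A t‖ ≤ κ) (c : F)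
    (hsmall : κ * (‖c‖ + 1) * (b - a) ≤ 1) :
    ∃ y : ℝ → F, y a = c ∧ IsIntegralCurveOn y (fun t ↦ A t) (Icc a b) := by
  have hκ₀ : 0 ≤ κ := (norm_nonneg _).trans (hκ a (left_mem_Icc.2 hab))
  have hpl : IsPicardLindelof (fun t ↦ A t) (⟨a, left_mem_Icc.2 hab⟩ : Icc a b) c 1 0
      ⟨κ * (‖c‖ + 1), by positivity⟩ ⟨κ, hκ₀⟩ :=
    { lipschitzOnWith := fun t ht ↦ ((A t).lipschitz.weaken (hκ t ht)).lipschitzOnWith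
      continuousOn := fun x _ ↦ hA.clm_apply continuousOn_const
      norm_le := fun t ht x hx ↦ by
        refine le_of_opNorm_le_of_le _ (hκ t ht) ?_
        exact (norm_le_norm_add_norm_sub' x c).trans
          (add_le_add_right (by simpa [dist_eq_norm] using hx) _)
      mul_max_le := by
        change κ * (‖c‖ + 1) * max (b - a) (a - a) ≤ 1 - 0
        simpa [hab] using hsmall }
  exact hpl.exists_eq_forall_mem_Icc_hasDerivWithinAt₀

end LinearODE

theorem exists_locally_constant_section {ι B X : Type*} [TopologicalSpace B]
    [SimplyConnectedSpace B] [LocallyPathConnectedSpace B] {S : ι → Set B}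
    (hS : ∀ i, IsOpen (S i)) (index : B → ι) (mem_index : ∀ b, b ∈ S (index b))
    (T : ι → ι → X → X) (T_self : ∀ i, ∀ b ∈ S i, ∀ v, T i i v = v)
    (T_comp : ∀ i j k, ∀ b ∈ S i ∩ S j ∩ S k, ∀ v, T j k (T i j v) = T i k v) (b₀ : B) (v₀ : X) :
    ∃ σ : ι → B → X, σ (index b₀) b₀ = v₀ ∧
      (∀ i j, ∀ b ∈ S i ∩ S j, T i j (σ i b) = σ j b) ∧
      ∀ i, ∀ b ∈ S i, ∀ᶠ b' in 𝓝 b, σ i b' = σ i b := by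
  let _ : TopologicalSpace X := ⊥
  have : DiscreteTopology X := ⟨rfl⟩
  -- A bundle with discrete fibre is a covering, so a section is a lift of the identity of `B`.
  let Z : FiberBundleCore ι B X :=
    { baseSet := S
      isOpen_baseSet := hS
      indexAt := index
      mem_baseSet_at := mem_index
      coordChange := fun i j _ ↦ T i j
      coordChange_self := T_self
      continuousOn_coordChange := fun _ _ ↦
        (continuous_of_discreteTopology.comp continuous_snd).continuousOn
      coordChange_comp := T_comp }
  have hcover : IsCoveringMap Z.proj := FiberBundle.isCoveringMap (F := X) (E := Z.Fiber)
  obtain ⟨lift, ⟨hlift₀, hlift⟩, -⟩ := hcover.existsUnique_continuousMap_lifts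
    (ContinuousMap.id B) b₀ (⟨b₀, v₀⟩ : Z.TotalSpace) rfl
  have hproj : ∀ b, (lift b).1 = b := congrFun hlift
  let fiber : Z.TotalSpace → X := fun z ↦ z.2
  let σ : ι → B → X := fun i b ↦ (Z.localTriv i (lift b)).2
  have hσ : ∀ i b, σ i b = T (index b) i (fiber (lift b)) := fun i b ↦ by
    have h : σ i b = T (index (lift b).1) i (fiber (lift b)) := rfl
    rw [h, hproj]
  refine ⟨σ, ?_, fun i j b hb ↦ ?_, fun i b hb ↦ ?_⟩
  · rw [hσ, T_self _ _ (mem_index b₀), hlift₀]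
  · rw [hσ, hσ, T_comp _ _ _ b ⟨⟨mem_index b, hb.1⟩, hb.2⟩]
  · have hsource : lift b ∈ (Z.localTriv i).source := by
      rw [Z.mem_localTriv_source]
      change (lift b).1 ∈ S i
      rwa [hproj]
    have hcont : ContinuousAt (σ i) b := continuous_snd.continuousAt.comp
      (((Z.localTriv i).continuousAt hsource).comp lift.continuous.continuousAt)
    exact hcont.eventually (mem_nhds_discrete.2 (mem_singleton _))

section Radial

variable {E V : Type*} [NormedAddCommGroup E] [NormedSpace ℝ E]
  [NormedAddCommGroup V] [NormedSpace ℝ V]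

/-- The value of `ω` on the velocity at time `t` of the segment from `p` to `x`. -/
def radialForm (ω : E → E →L[ℝ] V) (p : E) (z : ℝ × E) : V :=
  ω (p + z.1 • (z.2 - p)) (z.2 - p)

variable {ω : E → E →L[ℝ] V} {p x : E} {t : ℝ}

theorem contDiffAt_radialForm (hω : ContDiffAt ℝ 1 ω (p + t • (x - p))) :
    ContDiffAt ℝ 1 (radialForm ω p) (t, x) := by
  refine ContDiffAt.clm_apply ?_ (by fun_prop)
  exact ContDiffAt.comp (f := fun z : ℝ × E ↦ p + z.1 • (z.2 - p)) (t, x) hω (by fun_prop)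

theorem fderiv_radialForm_inr (hω : DifferentiableAt ℝ ω (p + t • (x - p))) (h : E) :
    fderiv ℝ (radialForm ω p) (t, x) (0, h) =
      ω (p + t • (x - p)) h + t • fderiv ℝ ω (p + t • (x - p)) h (x - p) := by
  have hdisp : HasFDerivAt (fun z : ℝ × E ↦ z.2 - p) (snd ℝ ℝ E) (t, x) :=
    hasFDerivAt_snd.sub_const p
  have hpoint := (hasFDerivAt_fst.smul hdisp).const_add p
  have hform := (HasFDerivAt.comp (t, x) hω.hasFDerivAt hpoint).clm_apply hdisp
  rw [show fderiv ℝ (radialForm ω p) (t, x) = _ from hform.fderiv]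
  simp

theorem hasDerivAt_radial {f : E → V} (hf : DifferentiableAt ℝ f (p + t • (x - p))) :
    HasDerivAt (fun t : ℝ ↦ f (p + t • (x - p))) (fderiv ℝ f (p + t • (x - p)) (x - p)) t := by
  have hray : HasDerivAt (fun t : ℝ ↦ p + t • (x - p)) (x - p) t := by
    simpa using ((hasDerivAt_id t).smul_const (x - p)).const_add p
  exact hf.hasFDerivAt.comp_hasDerivAt t hray

end Radial

section ParallelFrames

variable {E 𝔸 : Type*} [NormedAddCommGroup E] [NormedSpace ℝ E]
  [NormedRing 𝔸] [NormedAlgebra ℝ 𝔸]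

/-- The curvature form `dω + ω ∧ ω` of an algebra-valued connection form `ω`, as a bilinear map on
tangent vectors. -/
def curvature (ω : E → E →L[ℝ] 𝔸) (x : E) : E →L[ℝ] E →L[ℝ] 𝔸 :=
  let D := fderiv ℝ ω x + (mul ℝ 𝔸).bilinearComp (ω x) (ω x)
  D - D.flip

/-- `G` is a parallel frame on `s` for the connection form `ω`: it solves `dG = G ω` at every point
of `s`. -/
def IsParallelOn (ω : E → E →L[ℝ] 𝔸) (G : E → 𝔸) (s : Set E) : Prop :=
  ∀ x ∈ s, HasFDerivAt G (mul ℝ 𝔸 (G x) ∘L ω x) x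

variable {ω : E → E →L[ℝ] 𝔸} {G H : E → 𝔸} {s : Set E} {p x : E} {t : ℝ}

theorem curvature_apply (u v : E) : curvature ω x u v =
    fderiv ℝ ω x u v - fderiv ℝ ω x v u + (ω x u * ω x v - ω x v * ω x u) := by
  simp [curvature, add_sub_add_comm]

theorem fderiv_apply_comm_of_curvature_eq_zero (h : curvature ω x = 0) (u v : E) :
    fderiv ℝ ω x u v = fderiv ℝ ω x v u - (ω x u * ω x v - ω x v * ω x u) := by
  have huv := curvature_apply (ω := ω) (x := x) u v
  rw [h, zero_apply, zero_apply] at huv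
  rw [eq_sub_iff_add_eq, ← sub_eq_zero, add_sub_right_comm, ← huv]

theorem hasDerivWithinAt_radial_variation {I : Set ℝ} {y : ℝ → 𝔸}
    (hω : ContDiffAt ℝ 1 ω (p + t • (x - p))) (hflat : curvature ω (p + t • (x - p)) = 0)
    (hy : HasDerivWithinAt y (y t * radialForm ω p (t, x)) I t) :
    HasDerivWithinAt (fun t ↦ t • (mul ℝ 𝔸 (y t) ∘L ω (p + t • (x - p))))
      ((mul ℝ 𝔸).flip (radialForm ω p (t, x)) ∘L (t • (mul ℝ 𝔸 (y t) ∘L ω (p + t • (x - p)))) +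
        (fderiv ℝ (fun z ↦ (mul ℝ 𝔸).flip (radialForm ω p z)) (t, x) ∘L inr ℝ ℝ E).flip (y t))
      I t := by
  have hωd := hω.differentiableAt one_ne_zero
  have hprod : HasDerivWithinAt (fun t ↦ mul ℝ 𝔸 (y t) ∘L ω (p + t • (x - p))) _ I t :=
    HasDerivWithinAt.clm_comp
      ((mul ℝ 𝔸).hasFDerivAt.comp_hasDerivWithinAt t hy) (hasDerivAt_radial hωd).hasDerivWithinAt
  refine ((hasDerivWithinAt_id t I).smul hprod).congr_deriv ?_
  ext h
  have hΛ := ((mul ℝ 𝔸).flip.hasFDerivAt.comp (t, x)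
    ((contDiffAt_radialForm hω).differentiableAt one_ne_zero).hasFDerivAt).fderiv
  simp only [Function.comp_def] at hΛ
  -- The product rule yields `dω (x - p) h` where the variational equation has `dω h (x - p)`;
  -- flatness accounts exactly for the commutator by which they differ.
  have hcurv : fderiv ℝ ω (p + t • (x - p)) (x - p) h = fderiv ℝ ω (p + t • (x - p)) h (x - p) -
      (radialForm ω p (t, x) * ω (p + t • (x - p)) h -
        ω (p + t • (x - p)) h * radialForm ω p (t, x)) :=
    fderiv_apply_comm_of_curvature_eq_zero hflat (x - p) h
  simp only [id_eq, smul_add, one_smul, add_apply, smul_apply, comp_apply, mul_apply', mul_assoc,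
    hcurv, mul_sub, comp_smulₛₗ, Real.ringHom_apply, hΛ, flip_apply, inr_apply,
    fderiv_radialForm_inr hωd, map_add, map_smul]
  module

theorem isParallelOn_of_isIntegralCurveOn_radial (hs : IsOpen s) (hstar : StarConvex ℝ p s)
    (hω : ContDiffOn ℝ 1 ω s) (hflat : ∀ x ∈ s, curvature ω x = 0) {c : 𝔸} {y : E → ℝ → 𝔸}
    (hy₀ : ∀ x ∈ s, y x 0 = c)
    (hy : ∀ x ∈ s,
      IsIntegralCurveOn (y x) (fun t ↦ (mul ℝ 𝔸).flip (radialForm ω p (t, x))) (Icc 0 1)) :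
    IsParallelOn ω (fun x ↦ y x 1) s := by
  intro x hx
  have hray : ∀ t ∈ Icc (0 : ℝ) 1, p + t • (x - p) ∈ s := fun t ht ↦
    hstar.add_smul_sub_mem hx ht.1 ht.2
  have hωray : ∀ t ∈ Icc (0 : ℝ) 1, ContDiffAt ℝ 1 ω (p + t • (x - p)) := fun t ht ↦
    hω.contDiffAt (hs.mem_nhds (hray t ht))
  have hvar := hasFDerivAt_of_isIntegralCurveOn
    (Λ := fun z ↦ (mul ℝ 𝔸).flip (radialForm ω p z)) (x₀ := x) (t := 1)
    (Z := fun t ↦ t • (mul ℝ 𝔸 (y x t) ∘L ω (p + t • (x - p))))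
    (fun t ht ↦ (mul ℝ 𝔸).flip.contDiff.contDiffAt.comp _ (contDiffAt_radialForm (hωray t ht)))
    (eventually_of_mem (hs.mem_nhds hx) hy₀) (eventually_of_mem (hs.mem_nhds hx) hy)
    (zero_smul _ _)
    (fun t ht ↦ hasDerivWithinAt_radial_variation (hωray t ht) (hflat _ (hray t ht)) (hy x hx t ht))
    (right_mem_Icc.2 zero_le_one)
  simpa using hvar

theorem exists_isIntegralCurveOn_radial [CompleteSpace 𝔸]
    (hω : ∀ t ∈ Icc (0 : ℝ) 1, ContinuousAt ω (p + t • (x - p))) {M : ℝ}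
    (hM : ∀ t ∈ Icc (0 : ℝ) 1, ‖ω (p + t • (x - p))‖ ≤ M) (c : 𝔸)
    (hsmall : M * ‖x - p‖ * (‖c‖ + 1) ≤ 1) :
    ∃ y : ℝ → 𝔸, y 0 = c ∧
      IsIntegralCurveOn y (fun t ↦ (mul ℝ 𝔸).flip (radialForm ω p (t, x))) (Icc 0 1) := by
  refine exists_isIntegralCurveOn_of_norm_le zero_le_one (fun t ht ↦ ?_) (fun t ht ↦ ?_) c
    (by simpa using hsmall)
  · have hray : ContinuousAt (fun t : ℝ ↦ ω (p + t • (x - p)) (x - p)) t :=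
      (ContinuousAt.comp (f := fun t : ℝ ↦ p + t • (x - p)) (hω t ht) (by fun_prop)).clm_apply
        continuousAt_const
    exact ((mul ℝ 𝔸).flip.continuous.continuousAt.comp hray).continuousWithinAt
  · calc ‖(mul ℝ 𝔸).flip (radialForm ω p (t, x))‖ ≤ 1 * ‖radialForm ω p (t, x)‖ :=
          le_of_opNorm_le _ ((opNorm_flip _).trans_le (opNorm_mul_le ℝ 𝔸)) _
      _ ≤ M * ‖x - p‖ := (one_mul _).trans_le (le_of_opNorm_le _ (hM t ht) _)

theorem eq_of_isIntegralCurveOn_radial_self {y : ℝ → 𝔸}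
    (hy : IsIntegralCurveOn y (fun t ↦ (mul ℝ 𝔸).flip (radialForm ω p (t, p))) (Icc 0 1))
    (ht : t ∈ Icc (0 : ℝ) 1) : y t = y 0 := by
  refine constant_of_has_deriv_right_zero (fun s hs ↦ (hy s hs).continuousWithinAt)
    (fun s hs ↦ ?_) t ht
  simpa [radialForm] using
    (hy s (Ico_subset_Icc_self hs)).mono_of_mem_nhdsWithin (Icc_mem_nhdsGE_of_mem hs)

theorem exists_isParallelOn_ball [CompleteSpace 𝔸] (hω : ContDiffAt ℝ 1 ω p)
    (hflat : ∀ᶠ x in 𝓝 p, curvature ω x = 0) :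
    ∃ r > 0, ∃ G : E → 𝔸, G p = 1 ∧ IsParallelOn ω G (ball p r) := by
  set M := ‖ω p‖ + 1
  have hbound : ∀ᶠ x in 𝓝 p, ‖ω x‖ ≤ M :=
    (hω.continuousAt.norm.eventually_lt continuousAt_const (lt_add_one _)).mono fun _ h ↦ h.le
  have hsmall : ∀ᶠ x in 𝓝 p, M * ‖x - p‖ * (‖(1 : 𝔸)‖ + 1) < 1 :=
    ContinuousAt.eventually_lt (by fun_prop) continuousAt_const (by simp)
  obtain ⟨r, hr, hball⟩ := Metric.eventually_nhds_iff_ball.1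
    ((hω.eventually (by simp)).and (hflat.and (hbound.and hsmall)))
  have hray : ∀ x ∈ ball p r, ∀ t ∈ Icc (0 : ℝ) 1, p + t • (x - p) ∈ ball p r := fun x hx t ht ↦
    ((convex_ball p r).starConvex (mem_ball_self hr)).add_smul_sub_mem hx ht.1 ht.2
  choose! y hy₀ hy using fun x (hx : x ∈ ball p r) ↦ exists_isIntegralCurveOn_radial
    (fun t ht ↦ (hball _ (hray x hx t ht)).1.continuousAt)
    (fun t ht ↦ (hball _ (hray x hx t ht)).2.2.1) (1 : 𝔸) (hball x hx).2.2.2.le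
  have hp : p ∈ ball p r := mem_ball_self hr
  have hyp : y p 1 = 1 :=
    (eq_of_isIntegralCurveOn_radial_self (hy p hp) (right_mem_Icc.2 zero_le_one)).trans (hy₀ p hp)
  exact ⟨r, hr, fun x ↦ y x 1, hyp, isParallelOn_of_isIntegralCurveOn_radial isOpen_ball
    ((convex_ball p r).starConvex (mem_ball_self hr))
    (fun x hx ↦ (hball x hx).1.contDiffWithinAt) (fun x hx ↦ (hball x hx).2.1) hy₀ hy⟩

theorem IsParallelOn.mono {s' : Set E} (hG : IsParallelOn ω G s) (h : s' ⊆ s) :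
    IsParallelOn ω G s' :=
  fun x hx ↦ hG x (h hx)

theorem IsParallelOn.const_mul (hG : IsParallelOn ω G s) (c : 𝔸) :
    IsParallelOn ω (fun x ↦ c * G x) s := fun x hx ↦ by
  refine ((hG x hx).const_mul c).congr_fderiv ?_
  ext u
  simp [mul_assoc]

theorem IsParallelOn.hasFDerivAt_mul_ringInverse [CompleteSpace 𝔸] (hG : IsParallelOn ω G s)
    (hH : IsParallelOn ω H s) (hx : x ∈ s) (hunit : IsUnit (H x)) :
    HasFDerivAt (fun x ↦ G x * Ring.inverse (H x)) (0 : E →L[ℝ] 𝔸) x := by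
  obtain ⟨h, hh⟩ := hunit
  have hinv := (hasFDerivAt_ringInverse (𝕜 := ℝ) h)
  rw [hh] at hinv
  refine ((hG x hx).mul' (hinv.comp x (hH x hx))).congr_fderiv ?_
  ext u
  simp [← hh, mul_assoc]

theorem IsParallelOn.exists_eq_const_mul [CompleteSpace 𝔸] (hs : IsOpen s)
    (hsc : IsPreconnected s) (hG : IsParallelOn ω G s) (hH : IsParallelOn ω H s)
    (hunit : ∀ x ∈ s, IsUnit (H x)) : ∃ c : 𝔸, ∀ x ∈ s, G x = c * H x := by
  have hderiv := fun x hx ↦ hG.hasFDerivAt_mul_ringInverse hH hx (hunit x hx)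
  obtain ⟨c, hc⟩ := hs.exists_is_const_of_fderiv_eq_zero hsc
    (fun x hx ↦ (hderiv x hx).differentiableAt.differentiableWithinAt)
    (fun x hx ↦ (hderiv x hx).fderiv)
  exact ⟨c, fun x hx ↦ by rw [← hc x hx, Ring.inverse_mul_cancel_right _ _ (hunit x hx)]⟩

theorem exists_isUnit_isParallelOn_ball [CompleteSpace 𝔸] (hω : ContDiffAt ℝ 1 ω p)
    (hflat : ∀ᶠ x in 𝓝 p, curvature ω x = 0) :
    ∃ r > 0, ∃ G : E → 𝔸, IsParallelOn ω G (ball p r) ∧ ∀ x ∈ ball p r, IsUnit (G x) := by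
  obtain ⟨r, hr, G, hG₁, hG⟩ := exists_isParallelOn_ball hω hflat
  have hunit : ∀ᶠ x in 𝓝 p, IsUnit (G x) :=
    (hG p (mem_ball_self hr)).continuousAt.eventually
      (Units.isOpen.mem_nhds (hG₁ ▸ isUnit_one))
  obtain ⟨δ, hδ, hball⟩ := Metric.eventually_nhds_iff_ball.1 hunit
  exact ⟨min r δ, lt_min hr hδ, G, hG.mono (ball_subset_ball (min_le_left r δ)),
    fun x hx ↦ hball x (ball_subset_ball (min_le_right r δ) hx)⟩

theorem exists_isParallelOn_of_forall_ball [CompleteSpace 𝔸] {U : Set E} (hU : IsOpen U)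
    [SimplyConnectedSpace U] {r : U → ℝ} (hr : ∀ p, 0 < r p) {G : U → E → 𝔸}
    (hG : ∀ p : U, IsParallelOn ω (G p) (ball p (r p)))
    (hunit : ∀ p : U, ∀ x ∈ ball (p : E) (r p), IsUnit (G p x)) {x₀ : E} (hx₀ : x₀ ∈ U) :
    ∃ H : E → 𝔸, H x₀ = 1 ∧ IsParallelOn ω H U := by
  have := hU.locallyPathConnectedSpace
  have hself : ∀ p : U, (p : E) ∈ ball (p : E) (r p) := fun p ↦ mem_ball_self (hr p)
  choose c hc using fun i j : U ↦ IsParallelOn.exists_eq_const_mul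
    (isOpen_ball.inter isOpen_ball) ((convex_ball (i : E) (r i)).inter
      (convex_ball (j : E) (r j))).isPreconnected ((hG i).mono inter_subset_left)
    ((hG j).mono inter_subset_right) fun x hx ↦ hunit j x hx.2
  have c_self : ∀ i, c i i = 1 := fun i ↦
    (hunit i i (hself i)).mul_right_cancel (by rw [← hc i i i ⟨hself i, hself i⟩, one_mul])
  have c_comp : ∀ i j k : U, ∀ x ∈ ball (i : E) (r i) ∩ ball (j : E) (r j) ∩ ball (k : E) (r k),
      c i j * c j k = c i k := fun i j k x ⟨⟨hi, hj⟩, hk⟩ ↦ by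
    refine (hunit k x hk).mul_right_cancel ?_
    rw [mul_assoc, ← hc j k x ⟨hj, hk⟩, ← hc i j x ⟨hi, hj⟩, hc i k x ⟨hi, hk⟩]
  obtain ⟨σ, hσ₀, hσ, hσ_const⟩ := exists_locally_constant_section
    (S := fun i : U ↦ Subtype.val ⁻¹' ball (i : E) (r i))
    (fun i ↦ isOpen_ball.preimage continuous_subtype_val) (fun i ↦ i) hself
    (fun i j v ↦ v * c i j) (fun i _ _ v ↦ by rw [c_self, mul_one])
    (fun i j k x hx v ↦ by rw [mul_assoc, c_comp i j k x hx])
    ⟨x₀, hx₀⟩ (Ring.inverse (G ⟨x₀, hx₀⟩ x₀))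
  let H : E → 𝔸 := Function.extend (↑) (fun x : U ↦ σ x x * G x x) 0
  have hH : ∀ x : U, H x = σ x x * G x x := Subtype.val_injective.extend_apply _ _
  have hH_eq : ∀ p : U, H =ᶠ[𝓝 (p : E)] fun x ↦ σ p p * G p x := fun p ↦ by
    rw [EventuallyEq, ← hU.isOpenEmbedding_subtypeVal.map_nhds_eq p, eventually_map]
    filter_upwards [hσ_const p p (hself p),
      (isOpen_ball.preimage continuous_subtype_val).mem_nhds (hself p)] with y hy hyp
    rw [hH, ← hσ p y y ⟨hyp, hself y⟩, mul_assoc, ← hc p y y ⟨hyp, hself y⟩, hy]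
  refine ⟨H, ?_, fun x hx ↦ ?_⟩
  · rw [hH ⟨x₀, hx₀⟩, hσ₀, Ring.inverse_mul_cancel _ (hunit _ _ (hself _))]
  · rw [(hH_eq ⟨x, hx⟩).eq_of_nhds]
    exact ((hG ⟨x, hx⟩).const_mul (σ ⟨x, hx⟩ ⟨x, hx⟩) x (hself _)).congr_of_eventuallyEq
      (hH_eq ⟨x, hx⟩)

theorem exists_isParallelOn_of_simplyConnectedSpace [CompleteSpace 𝔸] {U : Set E} (hU : IsOpen U)
    [SimplyConnectedSpace U] (hω : ContDiffOn ℝ 1 ω U) (hflat : ∀ x ∈ U, curvature ω x = 0)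
    {x₀ : E} (hx₀ : x₀ ∈ U) : ∃ G : E → 𝔸, G x₀ = 1 ∧ IsParallelOn ω G U := by
  choose r hr G hG hunit using fun p : U ↦ exists_isUnit_isParallelOn_ball
    (hω.contDiffAt (hU.mem_nhds p.2)) (eventually_of_mem (hU.mem_nhds p.2) hflat)
  exact exists_isParallelOn_of_forall_ball hU hr hG hunit hx₀

theorem contDiffOn_succ_of_hasFDerivAt {V : Type*} [NormedAddCommGroup V] [NormedSpace ℝ V]
    {f : E → V} {f' : E → E →L[ℝ] V} {n : ℕ∞} (hs : IsOpen s) (hf' : ContDiffOn ℝ n f' s)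
    (hf : ∀ x ∈ s, HasFDerivAt f (f' x) x) : ContDiffOn ℝ (n + 1) f s :=
  (contDiffOn_succ_iff_fderiv_of_isOpen hs).2
    ⟨fun x hx ↦ (hf x hx).differentiableAt.differentiableWithinAt, by simp,
      hf'.congr fun x hx ↦ (hf x hx).fderiv⟩

theorem IsParallelOn.contDiffOn {n : ℕ∞} (hs : IsOpen s) (hω : ContDiffOn ℝ n ω s)
    (hG : IsParallelOn ω G s) : ContDiffOn ℝ (n + 1) G s := by
  have hderiv {k : ℕ∞} (hk : k ≤ n) (hGk : ContDiffOn ℝ k G s) : ContDiffOn ℝ (k + 1) G s :=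
    contDiffOn_succ_of_hasFDerivAt hs
      (((mul ℝ 𝔸).contDiff.comp_contDiffOn hGk).clm_comp (hω.of_le (mod_cast hk))) hG
  refine hderiv le_rfl (contDiffOn_iff_forall_nat_le.2 fun k hk ↦ ?_)
  induction k with
  | zero => exact contDiffOn_zero.2 fun x hx ↦ (hG x hx).continuousAt.continuousWithinAt
  | succ k ih =>
    have hkn : (k : ℕ∞) ≤ n := le_trans (by simp) hk
    exact mod_cast hderiv hkn (ih hkn)

theorem IsParallelOn.hasFDerivAt_mul_star [StarRing 𝔸] [StarModule ℝ 𝔸] [ContinuousStar 𝔸]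
    (hG : IsParallelOn ω G s) (hx : x ∈ s) (hskew : ∀ u, ω x u ∈ skewAdjoint 𝔸) :
    HasFDerivAt (fun x ↦ G x * star (G x)) (0 : E →L[ℝ] 𝔸) x := by
  refine ((hG x hx).mul' (hG x hx).star).congr_fderiv ?_
  ext u
  simp [skewAdjoint.mem_iff.1 (hskew u), mul_assoc]

theorem IsParallelOn.mul_star_eq [StarRing 𝔸] [StarModule ℝ 𝔸] [ContinuousStar 𝔸]
    (hs : IsOpen s) (hsc : IsPreconnected s) (hG : IsParallelOn ω G s)
    (hskew : ∀ x ∈ s, ∀ u, ω x u ∈ skewAdjoint 𝔸) {y : E} (hx : x ∈ s) (hy : y ∈ s) :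
    G x * star (G x) = G y * star (G y) := by
  have hderiv := fun z hz ↦ hG.hasFDerivAt_mul_star hz (hskew z hz)
  exact hs.is_const_of_fderiv_eq_zero hsc
    (fun z hz ↦ (hderiv z hz).differentiableAt.differentiableWithinAt)
    (fun z hz ↦ (hderiv z hz).fderiv) hx hy

end ParallelFrames

section Poincare

variable {E V : Type*} [NormedAddCommGroup E] [NormedSpace ℝ E]
  [NormedAddCommGroup V] [NormedSpace ℝ V]

variable (V) in
/-- The embedding of `V` as the strictly triangular block of `End (ℝ × V)`, sending `v` to
`(a, w) ↦ (0, a • v)`. It turns `V`-valued forms into connection forms whose quadratic curvature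
term vanishes. -/
def translationGenerator : V →L[ℝ] (ℝ × V) →L[ℝ] (ℝ × V) :=
  smulRightL ℝ (ℝ × V) (ℝ × V) (fst ℝ ℝ V) ∘L inr ℝ ℝ V

theorem translationGenerator_apply (v : V) (z : ℝ × V) :
    translationGenerator V v z = (0, z.1 • v) := by
  simp [translationGenerator]

theorem translationGenerator_mul (v w : V) :
    translationGenerator V v * translationGenerator V w = 0 := by
  ext z <;> simp [translationGenerator_apply]

theorem curvature_translationGenerator_comp {η : E → E →L[ℝ] V} {x : E}
    (hη : DifferentiableAt ℝ η x) (hclosed : ∀ u v, fderiv ℝ η x u v = fderiv ℝ η x v u) :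
    curvature (fun x ↦ translationGenerator V ∘L η x) x = 0 := by
  have hderiv := ((hasFDerivAt_const (translationGenerator V) x).clm_comp hη.hasFDerivAt).fderiv
  refine ext fun u ↦ ext fun v ↦ ?_
  rw [curvature_apply, hderiv]
  simp [translationGenerator_mul, hclosed u v]

theorem IsParallelOn.apply_zero_mk_eq {η : E → E →L[ℝ] V} {G : E → (ℝ × V) →L[ℝ] (ℝ × V)}
    {s : Set E} (hs : IsOpen s) (hsc : IsPreconnected s)
    (hG : IsParallelOn (fun x ↦ translationGenerator V ∘L η x) G s) {x y : E} (hx : x ∈ s)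
    (hy : y ∈ s) (v : V) : G x (0, v) = G y (0, v) := by
  have hderiv : ∀ z ∈ s, HasFDerivAt (fun z ↦ G z (0, v)) (0 : E →L[ℝ] ℝ × V) z := fun z hz ↦ by
    refine ((hG z hz).clm_apply (hasFDerivAt_const ((0 : ℝ), v) z)).congr_fderiv ?_
    ext u : 1
    simp [translationGenerator_apply, Prod.mk_zero_zero]
  exact hs.is_const_of_fderiv_eq_zero hsc
    (fun z hz ↦ (hderiv z hz).differentiableAt.differentiableWithinAt)
    (fun z hz ↦ (hderiv z hz).fderiv) hx hy

theorem exists_forall_hasFDerivAt_of_simplyConnectedSpace [CompleteSpace V] {U : Set E}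
    (hU : IsOpen U) [SimplyConnectedSpace U] {η : E → E →L[ℝ] V} (hη : ContDiffOn ℝ 1 η U)
    (hclosed : ∀ x ∈ U, ∀ u v, fderiv ℝ η x u v = fderiv ℝ η x v u) :
    ∃ f : E → V, ∀ x ∈ U, HasFDerivAt f (η x) x := by
  have hsc : IsPathConnected U := isPathConnected_iff_pathConnectedSpace.2 inferInstance
  obtain ⟨x₀, hx₀⟩ := hsc.nonempty
  obtain ⟨G, hG₁, hG⟩ := exists_isParallelOn_of_simplyConnectedSpace hU
    (contDiffOn_const.clm_comp hη) (fun x hx ↦ curvature_translationGenerator_comp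
      ((hη.contDiffAt (hU.mem_nhds hx)).differentiableAt one_ne_zero) (hclosed x hx)) hx₀
  have hfix : ∀ x ∈ U, ∀ v, G x (0, v) = (0, v) := fun x hx v ↦ by
    rw [hG.apply_zero_mk_eq hU hsc.isConnected.isPreconnected hx hx₀, hG₁]; rfl
  refine ⟨fun x ↦ (G x (1, 0)).2, fun x hx ↦ ?_⟩
  refine (HasFDerivAt.snd ((hG x hx).clm_apply
    (hasFDerivAt_const ((1 : ℝ), (0 : V)) x))).congr_fderiv ?_
  ext u
  simp [translationGenerator_apply, hfix x hx]

end Poincare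

section Components

variable {ι X E V : Type*} [Fintype ι] [NormedAddCommGroup E] [NormedSpace ℝ E]
  [NormedAddCommGroup V] [NormedSpace ℝ V]

/-- The differential form `∑ k, A k dx_k` on a coordinate space with coefficient functions `A k`. -/
def formOfComponents (A : ι → X → V) (x : X) : (ι → ℝ) →L[ℝ] V :=
  ∑ k, (proj k).smulRight (A k x)

theorem formOfComponents_mem (S : Submodule ℝ V) {A : ι → X → V} {x : X} (hA : ∀ k, A k x ∈ S)
    (u : ι → ℝ) : formOfComponents A x u ∈ S := by
  simpa [formOfComponents, sum_apply] using S.sum_mem fun k _ ↦ S.smul_mem (u k) (hA k)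

theorem formOfComponents_apply_single [DecidableEq ι] (A : ι → X → V) (x : X) (k : ι) :
    formOfComponents A x (Pi.single k 1) = A k x := by
  simp [formOfComponents, sum_apply, Pi.single_apply]

variable {A : ι → E → V} {s : Set E} {x : E}

theorem contDiffOn_formOfComponents {n : WithTop ℕ∞} (hA : ∀ k, ContDiffOn ℝ n (A k) s) :
    ContDiffOn ℝ n (formOfComponents A) s :=
  ContDiffOn.sum fun k _ ↦ contDiffOn_const.smulRight (hA k)

theorem fderiv_formOfComponents_apply_single [DecidableEq ι]
    (hA : ∀ k, DifferentiableAt ℝ (A k) x) (u : E) (k : ι) :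
    fderiv ℝ (formOfComponents A) x u (Pi.single k 1) = fderiv ℝ (A k) x u := by
  have hform : DifferentiableAt ℝ (formOfComponents A) x :=
    DifferentiableAt.fun_sum fun k _ ↦
      (smulRightL ℝ (ι → ℝ) V (proj k)).differentiableAt.comp x (hA k)
  have hcomp := hform.hasFDerivAt.clm_apply (hasFDerivAt_const (Pi.single k (1 : ℝ)) x)
  simp only [formOfComponents_apply_single] at hcomp
  simp [hcomp.fderiv]

end Components

theorem eq_of_forall_apply_single {ι V : Type*} [Finite ι] [DecidableEq ι] [NormedAddCommGroup V]
    [NormedSpace ℝ V] {L M : (ι → ℝ) →L[ℝ] V}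
    (h : ∀ k, L (Pi.single k 1) = M (Pi.single k 1)) : L = M :=
  coe_injective <| (Pi.basisFun ℝ ι).ext fun k ↦ by simpa using h k

section CoordinateForms

variable {ι V 𝔸 : Type*} [Fintype ι] [DecidableEq ι] [NormedAddCommGroup V] [NormedSpace ℝ V]
  [NormedRing 𝔸] [NormedAlgebra ℝ 𝔸] {q : ι → ℝ}

theorem curvature_formOfComponents_eq_zero {A : ι → (ι → ℝ) → 𝔸}
    (hA : ∀ k, DifferentiableAt ℝ (A k) q)
    (hflat : ∀ k l, fderiv ℝ (A l) q (Pi.single k 1) - fderiv ℝ (A k) q (Pi.single l 1) =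
      A l q * A k q - A k q * A l q) :
    curvature (formOfComponents A) q = 0 := by
  refine eq_of_forall_apply_single fun k ↦ eq_of_forall_apply_single fun l ↦ ?_
  simp only [curvature_apply, fderiv_formOfComponents_apply_single hA,
    formOfComponents_apply_single, hflat, zero_apply]
  abel

theorem fderiv_formOfComponents_comm {A : ι → (ι → ℝ) → V}
    (hA : ∀ k, DifferentiableAt ℝ (A k) q)
    (hclosed : ∀ k l, fderiv ℝ (A l) q (Pi.single k 1) = fderiv ℝ (A k) q (Pi.single l 1))
    (u v : ι → ℝ) :
    fderiv ℝ (formOfComponents A) q u v = fderiv ℝ (formOfComponents A) q v u := by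
  have hflip : fderiv ℝ (formOfComponents A) q = (fderiv ℝ (formOfComponents A) q).flip :=
    eq_of_forall_apply_single fun k ↦ eq_of_forall_apply_single fun l ↦ by
      simp only [flip_apply, fderiv_formOfComponents_apply_single hA, hclosed k l]
  exact DFunLike.congr_fun (DFunLike.congr_fun hflip u) v

end CoordinateForms

section PartialDerivatives

variable {m n : ℕ} {q : Fin m → ℝ}

theorem pd_apply {f : (Fin m → ℝ) → Fin n → ℝ} (hf : DifferentiableAt ℝ f q) (k : Fin m)
    (i : Fin n) : pd k f q i = pdr k (fun x ↦ f x i) q := by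
  rw [pd, pdr, fderiv_apply hf]
  rfl

theorem pd_mulVec {F : (Fin m → ℝ) → Matrix (Fin n) (Fin n) ℝ} {v : (Fin m → ℝ) → Fin n → ℝ}
    (hF : ∀ i j, DifferentiableAt ℝ (fun x ↦ F x i j) q) (hv : DifferentiableAt ℝ v q)
    (k : Fin m) :
    pd k (fun x ↦ F x *ᵥ v x) q = pdM k F q *ᵥ v q + F q *ᵥ pd k v q := by
  have hvi : ∀ i, DifferentiableAt ℝ (fun x ↦ v x i) q := differentiableAt_pi.1 hv
  have hFv : ∀ i, HasFDerivAt (fun x ↦ ∑ j, F x i j * v x j) _ q := fun i ↦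
    HasFDerivAt.fun_sum fun j _ ↦ (hF i j).hasFDerivAt.mul (hvi j).hasFDerivAt
  have hdiff : DifferentiableAt ℝ (fun x ↦ F x *ᵥ v x) q :=
    differentiableAt_pi.2 fun i ↦ (hFv i).differentiableAt
  ext i
  refine (pd_apply hdiff k i).trans ((DFunLike.congr_fun (hFv i).fderiv (Pi.single k 1)).trans ?_)
  simp only [Matrix.mulVec, dotProduct, Pi.add_apply, pdM, Matrix.of_apply, pd_apply hv, pdr,
    sum_apply, ← Finset.sum_add_distrib]
  refine Finset.sum_congr rfl fun j _ ↦ ?_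
  simp [add_comm, mul_comm]

end PartialDerivatives

theorem contDiffOn_mulVec {ι ι' E : Type*} [Fintype ι] [Fintype ι'] [NormedAddCommGroup E]
    [NormedSpace ℝ E] {s : Set E} {κ : WithTop ℕ∞} {F : E → Matrix ι ι' ℝ} {v : E → ι' → ℝ}
    (hF : ∀ i j, ContDiffOn ℝ κ (fun x ↦ F x i j) s) (hv : ContDiffOn ℝ κ v s) :
    ContDiffOn ℝ κ (fun x ↦ F x *ᵥ v x) s :=
  contDiffOn_pi.2 fun i ↦
    (ContDiffOn.sum fun j _ ↦ (hF i j).mul (contDiffOn_pi.1 hv j) :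
      ContDiffOn ℝ κ (fun x ↦ ∑ j, F x i j * v x j) s)

theorem det_eq_one_of_isPreconnected {ι X : Type*} [Fintype ι] [DecidableEq ι]
    [TopologicalSpace X] {s : Set X} (hs : IsPreconnected s) {F : X → Matrix ι ι ℝ}
    (hF : ∀ i j, ContinuousOn (fun x ↦ F x i j) s) (horth : ∀ x ∈ s, (F x)ᵀ * F x = 1)
    {x₀ : X} (hx₀ : x₀ ∈ s) (hdet : (F x₀).det = 1) {x : X} (hx : x ∈ s) : (F x).det = 1 := by
  have hcont : ContinuousOn (fun x ↦ (F x).det) s :=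
    (Continuous.matrix_det continuous_id).comp_continuousOn
      (continuousOn_pi.2 fun i ↦ continuousOn_pi.2 fun j ↦ hF i j)
  have hsq : EqOn ((fun x ↦ (F x).det) ^ 2) 1 s := fun x hx ↦ by
    simpa [sq] using congrArg Matrix.det (horth x hx)
  refine (hs.eq_one_or_eq_neg_one_of_sq_eq hcont hsq).elim (fun h ↦ h hx) fun h ↦ ?_
  have := hdet.symm.trans (h hx₀)
  norm_num at this

section MatrixFrames

open scoped Matrix.Norms.L2Operator

theorem contDiffOn_matrix_iff {ι E : Type*} [Fintype ι] [DecidableEq ι] [NormedAddCommGroup E]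
    [NormedSpace ℝ E] {s : Set E} {κ : WithTop ℕ∞} {A : E → Matrix ι ι ℝ} :
    ContDiffOn ℝ κ A s ↔ ∀ i j, ContDiffOn ℝ κ (fun x ↦ A x i j) s := by
  let e : (ι → ι → ℝ) ≃L[ℝ] Matrix ι ι ℝ := (Matrix.ofLinearEquiv ℝ).toContinuousLinearEquiv
  rw [← e.symm.comp_contDiffOn_iff, contDiffOn_pi]
  exact forall_congr' fun i ↦ contDiffOn_pi

theorem pdM_eq_fderiv {m n : ℕ} {A : (Fin m → ℝ) → Matrix (Fin n) (Fin n) ℝ} {q : Fin m → ℝ}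
    (hA : DifferentiableAt ℝ A q) (k : Fin m) : pdM k A q = fderiv ℝ A q (Pi.single k 1) := by
  ext i j
  let entry : Matrix (Fin n) (Fin n) ℝ →L[ℝ] ℝ :=
    (Matrix.entryLinearMap ℝ ℝ i j).toContinuousLinearMap
  exact DFunLike.congr_fun (entry.hasFDerivAt.comp q hA.hasFDerivAt).fderiv (Pi.single k 1)

theorem exists_orthogonal_parallel_frame {m n : ℕ} {U : Set (Fin m → ℝ)} (hU : IsOpen U)
    [SimplyConnectedSpace U] {r : ℕ∞} (hr : 1 ≤ r)
    {P : Fin m → (Fin m → ℝ) → Matrix (Fin n) (Fin n) ℝ}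
    (hP : ∀ k i j, ContDiffOn ℝ r (fun q ↦ P k q i j) U)
    (hskew : ∀ k, ∀ q ∈ U, (P k q)ᵀ = -(P k q))
    (hflat : ∀ k l, ∀ q ∈ U, pdM k (P l) q - pdM l (P k) q = P l q * P k q - P k q * P l q) :
    ∃ F : (Fin m → ℝ) → Matrix (Fin n) (Fin n) ℝ,
      (∀ i j, ContDiffOn ℝ (r + 1) (fun q ↦ F q i j) U) ∧
      (∀ q ∈ U, (F q)ᵀ * F q = 1 ∧ (F q).det = 1) ∧
      ∀ k, ∀ q ∈ U, pdM k F q = F q * P k q := by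
  have := FiniteDimensional.complete ℝ (Matrix (Fin n) (Fin n) ℝ)
  have hUpath : IsPathConnected U := isPathConnected_iff_pathConnectedSpace.2 inferInstance
  have hUpre : IsPreconnected U := hUpath.isConnected.isPreconnected
  obtain ⟨q₀, hq₀⟩ := hUpath.nonempty
  have hPr : ∀ k, ContDiffOn ℝ r (P k) U := fun k ↦ contDiffOn_matrix_iff.2 (hP k)
  have hPd : ∀ q ∈ U, ∀ k, DifferentiableAt ℝ (P k) q := fun q hq k ↦
    ((hPr k).contDiffAt (hU.mem_nhds hq)).differentiableAt (mod_cast (one_pos.trans_le hr).ne')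
  have hω : ContDiffOn ℝ r (formOfComponents P) U := contDiffOn_formOfComponents hPr
  obtain ⟨F, hF₀, hF⟩ := exists_isParallelOn_of_simplyConnectedSpace hU
    (hω.of_le (mod_cast hr)) (fun q hq ↦ curvature_formOfComponents_eq_zero (hPd q hq)
      fun k l ↦ by simpa only [pdM_eq_fderiv (hPd q hq _)] using hflat k l q hq) hq₀
  have hskewAdjoint : ∀ q ∈ U, ∀ u,
      formOfComponents P q u ∈ skewAdjoint (Matrix (Fin n) (Fin n) ℝ) := fun q hq ↦
    formOfComponents_mem (skewAdjoint.submodule ℝ _) fun k ↦ hskew k q hq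
  have horth : ∀ q ∈ U, (F q)ᵀ * F q = 1 := fun q hq ↦ by
    have h := hF.mul_star_eq hU hUpre hskewAdjoint hq hq₀
    rw [hF₀, star_one, one_mul] at h
    exact mul_eq_one_comm.1 h
  have hFr := contDiffOn_matrix_iff.1 (hF.contDiffOn hU hω)
  refine ⟨F, hFr, fun q hq ↦ ⟨horth q hq, ?_⟩, fun k q hq ↦ ?_⟩
  · exact det_eq_one_of_isPreconnected hUpre (fun i j ↦ (hFr i j).continuousOn) horth hq₀
      (by rw [hF₀, Matrix.det_one]) hq
  · rw [pdM_eq_fderiv (hF q hq).differentiableAt, (hF q hq).fderiv]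
    simp [formOfComponents_apply_single]

end MatrixFrames

theorem exists_contDiffOn_pd_eq {m n : ℕ} {U : Set (Fin m → ℝ)} (hU : IsOpen U)
    [SimplyConnectedSpace U] {r : ℕ∞} (hr : 1 ≤ r) {A : Fin m → (Fin m → ℝ) → Fin n → ℝ}
    (hA : ∀ k, ContDiffOn ℝ r (A k) U)
    (hclosed : ∀ k l, ∀ q ∈ U, pd k (A l) q = pd l (A k) q) :
    ∃ f : (Fin m → ℝ) → Fin n → ℝ,
      ContDiffOn ℝ (r + 1) f U ∧ ∀ k, ∀ q ∈ U, pd k f q = A k q := by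
  have hAd : ∀ q ∈ U, ∀ k, DifferentiableAt ℝ (A k) q := fun q hq k ↦
    ((hA k).contDiffAt (hU.mem_nhds hq)).differentiableAt (mod_cast (one_pos.trans_le hr).ne')
  have hη : ContDiffOn ℝ r (formOfComponents A) U := contDiffOn_formOfComponents hA
  obtain ⟨f, hf⟩ := exists_forall_hasFDerivAt_of_simplyConnectedSpace hU
    (hη.of_le (mod_cast hr)) fun q hq ↦ fderiv_formOfComponents_comm (hAd q hq)
      fun k l ↦ hclosed k l q hq
  refine ⟨f, contDiffOn_succ_of_hasFDerivAt hU hη hf, fun k q hq ↦ ?_⟩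
  rw [pd, (hf q hq).fderiv, formOfComponents_apply_single]

theorem realization_coherent_tangent_bundle_flat_general {m n : ℕ} {U : Set (Fin m → ℝ)}
    (hU : IsOpen U) [SimplyConnectedSpace U] {r : ℕ∞} (hr : 1 ≤ r)
    {P : Fin m → (Fin m → ℝ) → Matrix (Fin n) (Fin n) ℝ}
    {g : Fin m → (Fin m → ℝ) → Fin n → ℝ}
    (hP : ∀ k i j, ContDiffOn ℝ r (fun q ↦ P k q i j) U)
    (hg : ∀ k, ContDiffOn ℝ r (g k) U)
    (hskew : ∀ k, ∀ q ∈ U, (P k q)ᵀ = -(P k q))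
    (hcodazzi : ∀ k l, ∀ q ∈ U,
      pd k (g l) q - pd l (g k) q = P l q *ᵥ g k q - P k q *ᵥ g l q)
    (hflat : ∀ k l, ∀ q ∈ U, pdM k (P l) q - pdM l (P k) q = P l q * P k q - P k q * P l q) :
    ∃ (F : (Fin m → ℝ) → Matrix (Fin n) (Fin n) ℝ) (f : (Fin m → ℝ) → Fin n → ℝ),
      (∀ i j, ContDiffOn ℝ (r + 1) (fun q ↦ F q i j) U) ∧
      ContDiffOn ℝ (r + 1) f U ∧
      (∀ q ∈ U, (F q)ᵀ * F q = 1 ∧ (F q).det = 1) ∧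
      (∀ k, ∀ q ∈ U, pdM k F q = F q * P k q) ∧
      (∀ k, ∀ q ∈ U, pd k f q = F q *ᵥ g k q) ∧
      (∀ k l, ∀ q ∈ U, pd k f q ⬝ᵥ pd l f q = g k q ⬝ᵥ g l q) := by
  obtain ⟨F, hFr, hFrot, hF⟩ := exists_orthogonal_parallel_frame hU hr hP hskew hflat
  have hFd : ∀ q ∈ U, ∀ i j, DifferentiableAt ℝ (fun x ↦ F x i j) q := fun q hq i j ↦
    ((hFr i j).contDiffAt (hU.mem_nhds hq)).differentiableAt (by simp)
  have hgd : ∀ q ∈ U, ∀ k, DifferentiableAt ℝ (g k) q := fun q hq k ↦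
    ((hg k).contDiffAt (hU.mem_nhds hq)).differentiableAt (mod_cast (one_pos.trans_le hr).ne')
  have hFg : ∀ k, ContDiffOn ℝ r (fun q ↦ F q *ᵥ g k q) U := fun k ↦
    contDiffOn_mulVec (fun i j ↦ (hFr i j).of_le (by simp)) (hg k)
  have hclosed : ∀ k l, ∀ q ∈ U,
      pd k (fun x ↦ F x *ᵥ g l x) q = pd l (fun x ↦ F x *ᵥ g k x) q := fun k l q hq ↦ by
    rw [pd_mulVec (hFd q hq) (hgd q hq l), pd_mulVec (hFd q hq) (hgd q hq k), hF k q hq, hF l q hq,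
      ← Matrix.mulVec_mulVec, ← Matrix.mulVec_mulVec, ← Matrix.mulVec_add, ← Matrix.mulVec_add,
      ← sub_eq_zero, ← Matrix.mulVec_sub, add_sub_add_comm, hcodazzi k l q hq]
    simp
  obtain ⟨f, hfr, hf⟩ := exists_contDiffOn_pd_eq hU hr hFg hclosed
  refine ⟨F, f, hFr, hfr, hFrot, hF, hf, fun k l q hq ↦ ?_⟩
  rw [hf k q hq, hf l q hq, Matrix.dotProduct_mulVec, Matrix.vecMul_mulVec, (hFrot q hq).1,
    Matrix.vecMul_one]

/-- Realization of a flat coherent tangent bundle over a simply connected domain as a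
smooth map `f : U → ℝ^m`: given the connection matrices `P_k` and the components `g_k`
of the bundle homomorphism `φ` in an orthonormal frame, satisfying the coherence condition
and the flatness (curvature `c = 0`) condition, there are smooth `F : U → SO(m)` and
`f : U → ℝ^m` with `∂_k F = F P_k`, `∂_k f = F g_k`; in particular the induced first
fundamental form of `f` is the prescribed one. -/
theorem realization_coherent_tangent_bundle_flat {m : ℕ}
    (U : Set (Fin m → ℝ)) (hU : IsOpen U)
    (hconn : IsConnected U) (hsc : SimplyConnectedSpace U)
    (P : Fin m → (Fin m → ℝ) → Matrix (Fin m) (Fin m) ℝ)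
    (g : Fin m → (Fin m → ℝ) → (Fin m → ℝ))
    (hP : ∀ k i j, ContDiffOn ℝ (⊤ : ℕ∞) (fun q => P k q i j) U)
    (hg : ∀ k, ContDiffOn ℝ (⊤ : ℕ∞) (g k) U)
    (hskew : ∀ k, ∀ q ∈ U, (P k q)ᵀ = -(P k q))
    (hcodazzi : ∀ k l, ∀ q ∈ U,
      pd k (g l) q - pd l (g k) q = P l q *ᵥ g k q - P k q *ᵥ g l q)
    (hflat : ∀ k l, ∀ q ∈ U,
      pdM k (P l) q - pdM l (P k) q = P l q * P k q - P k q * P l q) :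
    ∃ (F : (Fin m → ℝ) → Matrix (Fin m) (Fin m) ℝ)
      (f : (Fin m → ℝ) → (Fin m → ℝ)),
      (∀ i j, ContDiffOn ℝ (⊤ : ℕ∞) (fun q => F q i j) U) ∧
      ContDiffOn ℝ (⊤ : ℕ∞) f U ∧
      (∀ q ∈ U, (F q)ᵀ * F q = 1 ∧ (F q).det = 1) ∧
      (∀ k, ∀ q ∈ U, pdM k F q = F q * P k q) ∧
      (∀ k, ∀ q ∈ U, pd k f q = F q *ᵥ g k q) ∧
      (∀ k l, ∀ q ∈ U, pd k f q ⬝ᵥ pd l f q = g k q ⬝ᵥ g l q) := by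
  obtain ⟨F, f, hF, hf, h⟩ :=
    realization_coherent_tangent_bundle_flat_general hU le_top hP hg hskew hcodazzi hflat
  exact ⟨F, f, hF, hf, h⟩
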